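/- (Proposition 5) Let z_0 > 0 be the point where r̂(ζ) := r(ζ)√ζ attains its maximum and x_0 := r̂(z_0). For ζ > 0 set a_n^−(ζ) := Σ_{k ≤ n/2} a_{n,k} ζ^k and a_n^+(ζ) := Σ_{k > n/2} a_{n,k} ζ^k. Then for every ζ > 0: the radius of convergence of the power series Σ_n a_n^−(ζ) x^n equals r̂_−(ζ)/√ζ, where r̂_−(ζ) := max_{0 < ω ≤ ζ} r̂(ω) (= r̂(ζ) if ζ ≤ z_0 and = x_0 if ζ ≥ z_0), and the radius of convergence of Σ_n a_n^+(ζ) x^n equals r̂_+(ζ)/√ζ, where r̂_+(ζ) := sup_{ω ≥ ζ} r̂(ω) (= r̂(ζ) if ζ ≥ z_0 and = x_0 if ζ ≤ z_0). -/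

import Mathlib

open SimpleGraph

/-- A rooted tree on vertex set `Fin n`: a connected acyclic simple graph
with a distinguished root vertex. -/
structure RTree (n : ℕ) where
  adj : SimpleGraph (Fin n)
  connected : adj.Connected
  acyclic : adj.IsAcyclic
  root : Fin n

/-- `v` is a leaf of the rooted tree `t`: a vertex of degree one other than the
root, except that in the one-vertex tree the root counts as a leaf. -/
def IsLeafV {n : ℕ} (t : RTree n) (v : Fin n) : Prop :=
  n = 1 ∨ ((t.adj.neighborSet v).ncard = 1 ∧ v ≠ t.root)

/-- The number of leaves of a rooted tree. -/
noncomputable def numLeaves {n : ℕ} (t : RTree n) : ℕ :=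
  Nat.card {v : Fin n // IsLeafV t v}

/-- Root-preserving isomorphism of rooted trees. -/
def treeSetoid (n : ℕ) : Setoid (RTree n) where
  r t t' := ∃ e : t.adj ≃g t'.adj, e t.root = t'.root
  iseqv := by
    constructor
    · intro t; exact ⟨RelIso.refl _, rfl⟩
    · rintro t t' ⟨e, he⟩
      exact ⟨e.symm, by rw [← he]; exact e.symm_apply_apply t.root⟩
    · rintro a b c ⟨e, he⟩ ⟨f, hf⟩
      exact ⟨e.trans f, by simp [RelIso.trans_apply, he, hf]⟩

/-- `aCount n k` : the number of isomorphism classes of rooted trees with `n`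
vertices and exactly `k` leaves. -/
noncomputable def aCount (n k : ℕ) : ℕ :=
  Nat.card (Quotient (Setoid.comap
    (Subtype.val : {t : RTree n // numLeaves t = k} → RTree n)
    (treeSetoid n)))

/-- The real bivariate generating function `T(x,z) = Σ_{n,k} a_{n,k} x^n z^k`. -/
noncomputable def Treal (x z : ℝ) : ℝ :=
  ∑' p : ℕ × ℕ, (aCount p.1 p.2 : ℝ) * x ^ p.1 * z ^ p.2

/-- `r(ζ)`, the radius of convergence in `x` of `T(x,ζ)` for `ζ > 0`. -/
noncomputable def rFun (ζ : ℝ) : ℝ :=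
  sSup {x : ℝ | 0 < x ∧
    Summable (fun p : ℕ × ℕ => (aCount p.1 p.2 : ℝ) * x ^ p.1 * ζ ^ p.2)}

/-- `r̂(ζ) = r(ζ)·√ζ`. -/
noncomputable def rhat (ζ : ℝ) : ℝ := rFun ζ * Real.sqrt ζ

/-- `a_n^−(ζ) = Σ_{k ≤ n/2} a_{n,k} ζ^k`. -/
noncomputable def aMinusP (n : ℕ) (ζ : ℝ) : ℝ :=
  ∑' k : ℕ, if 2 * k ≤ n then (aCount n k : ℝ) * ζ ^ k else 0

/-- `a_n^+(ζ) = Σ_{k > n/2} a_{n,k} ζ^k`. -/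
noncomputable def aPlusP (n : ℕ) (ζ : ℝ) : ℝ :=
  ∑' k : ℕ, if n < 2 * k then (aCount n k : ℝ) * ζ ^ k else 0

/-!
Joining two rooted trees at a new root gives a tree with one more vertex than the two together and
as many leaves, so the excess `2 k - (n + 1)` is additive under joins; a tree is a join of at most
two ordered pairs. Put `y = x √ζ` and `u = √ζ`, and let `S_d(y, u)` be the sum of
`y ^ (n + 1) * u ^ d / 2` over the trees of excess `d`. Then `S_d S_e ≤ S_(d+e)`, and whether
`S_d(y, u)` is finite does not depend on `u`.

If `S_0(y, 1)` is finite, then all `S_d(y, 1)` are, and `log S_d(y, 1)` is superadditive in `d ∈ ℤ`,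
hence bounded by a linear function of `d`. So there is a `u` with `S_d(y, u) ≤ 1` for all `d`, and
for every smaller `y'` the whole series converges at `(y', u)`, that is, `y' ≤ r̂(u²)`. Therefore
every `S_d(y, u)` diverges once `y > x₀`, and with it both halves of the series.

For fixed `y`, the half with `2 k ≤ n` decreases in `ζ` and the other half increases. Thus the
lower half converges at `ζ` for `y < r̂(ω)` with `ω ≤ ζ`, the upper half for `y < r̂(ω)` with
`ω ≥ ζ`, and where `r̂(ζ) < y` one of the two must diverge; this leaves exactly the stated radii.
-/

section RootedGraphs

variable {V W V' W' X : Type*} {G : SimpleGraph V} {H : SimpleGraph W}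
  {G' : SimpleGraph V'} {H' : SimpleGraph W'} {K : SimpleGraph X}

/-- Isomorphism of the rooted graphs `(G, r)` and `(H, s)`. -/
def RootedIso (G : SimpleGraph V) (r : V) (H : SimpleGraph W) (s : W) : Prop :=
  ∃ e : G ≃g H, e r = s

theorem RootedIso.symm {r : V} {s : W} : RootedIso G r H s → RootedIso H s G r := by
  rintro ⟨e, rfl⟩
  exact ⟨e.symm, e.symm_apply_apply r⟩

theorem RootedIso.trans {r : V} {s : W} {t : X} :
    RootedIso G r H s → RootedIso H s K t → RootedIso G r K t := by
  rintro ⟨e, rfl⟩ ⟨f, rfl⟩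
  exact ⟨e.trans f, rfl⟩

/-- The leaves of the tree `G` rooted at `r`. Each vertex must have degree one once the root has
received an extra half-edge; this makes the root of a one-vertex tree a leaf and excludes every
other root. -/
def leaves (G : SimpleGraph V) (r : V) : Set V :=
  {v | (G.neighborSet v).ncard + Set.indicator {r} 1 v = 1}

theorem mem_leaves_iff_of_ne {r v : V} (h : v ≠ r) :
    v ∈ leaves G r ↔ (G.neighborSet v).ncard = 1 := by
  simp [leaves, h]

theorem root_mem_leaves_iff [Finite V] {r : V} : r ∈ leaves G r ↔ G.IsIsolated r := by
  simp [leaves, Set.ncard_eq_zero (Set.toFinite _)]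

theorem RootedIso.ncard_leaves_eq {r : V} {s : W} :
    RootedIso G r H s → (leaves G r).ncard = (leaves H s).ncard := by
  rintro ⟨e, rfl⟩
  have mem_iff (v : V) : v ∈ leaves G r ↔ e v ∈ leaves H (e r) := by
    have degree_eq := Set.ncard_congr' (e.mapNeighborSet v)
    have root_iff : e v = e r ↔ v = r := e.injective.eq_iff
    classical simp [leaves, degree_eq, root_iff, Set.indicator]
  exact Set.ncard_congr' (e.toEquiv.subtypeEquiv mem_iff)

/-- The graph obtained from `G` by adding a new vertex `none` joined to the vertices in `S`. -/
def coneGraph (G : SimpleGraph V) (S : Set V) : SimpleGraph (Option V) where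
  Adj
    | none, none => False
    | none, some v => v ∈ S
    | some v, none => v ∈ S
    | some v, some w => G.Adj v w
  symm := ⟨by rintro (_ | v) (_ | w) h; exacts [h, h, h, G.adj_symm h]⟩
  loopless := ⟨by rintro (_ | v) h; exacts [h, G.loopless.irrefl v h]⟩

@[simp]
theorem coneGraph_adj_none_some {S : Set V} {v : V} :
    (coneGraph G S).Adj none (some v) ↔ v ∈ S := Iff.rfl

@[simp]
theorem coneGraph_adj_some_none {S : Set V} {v : V} :
    (coneGraph G S).Adj (some v) none ↔ v ∈ S := Iff.rfl

@[simp]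
theorem coneGraph_adj_some_some {S : Set V} {v w : V} :
    (coneGraph G S).Adj (some v) (some w) ↔ G.Adj v w := Iff.rfl

theorem connected_coneGraph {S : Set V} (hS : ∀ v, ∃ s ∈ S, G.Reachable s v) :
    (coneGraph G S).Connected := by
  let inclusion : G →g coneGraph G S := ⟨some, id⟩
  have reachable_apex : ∀ x, (coneGraph G S).Reachable none x := by
    rintro (_ | v)
    · rfl
    · obtain ⟨s, hs, hsv⟩ := hS v
      have apex_adj : (coneGraph G S).Adj none (some s) := hs
      exact apex_adj.reachable.trans (hsv.map inclusion)
  exact ⟨fun x y => (reachable_apex x).symm.trans (reachable_apex y)⟩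

theorem ncard_edgeSet_coneGraph_le [Finite V] (G : SimpleGraph V) (S : Set V) :
    (coneGraph G S).edgeSet.ncard ≤ G.edgeSet.ncard + S.ncard := by
  have subset_edges : (coneGraph G S).edgeSet ⊆
      Sym2.map some '' G.edgeSet ∪ (fun v => s(none, some v)) '' S := by
    intro e
    induction e using Sym2.ind with
    | _ x y =>
      rcases x with _ | v <;> rcases y with _ | w <;> intro h
      · exact h.elim
      · exact Or.inr ⟨w, h, rfl⟩
      · exact Or.inr ⟨v, h, Sym2.eq_swap⟩
      · exact Or.inl ⟨s(v, w), h, rfl⟩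
  exact (Set.ncard_le_ncard subset_edges (Set.toFinite _)).trans <|
    (Set.ncard_union_le _ _).trans <|
      add_le_add (Set.ncard_image_le (Set.toFinite _)) (Set.ncard_image_le (Set.toFinite _))

theorem isTree_of_connected_of_ncard_edgeSet_lt [Finite V] (hG : G.Connected)
    (h : G.edgeSet.ncard < Nat.card V) : G.IsTree := by
  have card_le := hG.card_vert_le_card_edgeSet_add_one
  rw [Nat.card_coe_set_eq] at card_le
  exact isTree_iff_connected_and_card.2 ⟨hG, by rw [Nat.card_coe_set_eq]; omega⟩

theorem neighborSet_coneGraph_none (G : SimpleGraph V) (S : Set V) :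
    (coneGraph G S).neighborSet none = some '' S := by
  ext (_ | v) <;> simp

theorem ncard_neighborSet_coneGraph_some [Finite V] (G : SimpleGraph V) (S : Set V) (v : V) :
    ((coneGraph G S).neighborSet (some v)).ncard =
      (G.neighborSet v).ncard + S.indicator 1 v := by
  have ncard_image := Set.ncard_image_of_injective (G.neighborSet v) (Option.some_injective V)
  by_cases hv : v ∈ S
  · have neighborSet_eq :
        (coneGraph G S).neighborSet (some v) = insert none (some '' G.neighborSet v) := by
      ext (_ | w) <;> simp [hv]
    rw [neighborSet_eq, Set.ncard_insert_of_notMem (by simp), ncard_image]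
    simp [hv]
  · have neighborSet_eq : (coneGraph G S).neighborSet (some v) = some '' G.neighborSet v := by
      ext (_ | w) <;> simp [hv]
    rw [neighborSet_eq, ncard_image]
    simp [hv]

theorem leaves_coneGraph [Finite V] (G : SimpleGraph V) {S : Set V} (hS : S.Nonempty) :
    leaves (coneGraph G S) none = some '' {v | (G.neighborSet v).ncard + S.indicator 1 v = 1} := by
  ext (_ | v)
  · simp [root_mem_leaves_iff, ← neighborSet_eq_empty, neighborSet_coneGraph_none, hS.ne_empty]
  · rw [mem_leaves_iff_of_ne (Option.some_ne_none v), ncard_neighborSet_coneGraph_some]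
    simp

theorem exists_iso_of_rootedIso_coneGraph {S : Set V} {S' : Set V'} :
    RootedIso (coneGraph G S) none (coneGraph G' S') none →
      ∃ f : G ≃g G', ∀ v ∈ S, f v ∈ S' := by
  rintro ⟨e, he⟩
  have some_removeNone (v : V) : some (e.toEquiv.removeNone v) = e (some v) :=
    e.toEquiv.removeNone_some <| Option.ne_none_iff_exists'.1 fun h =>
      Option.some_ne_none v (e.injective (h.trans he.symm))
  refine ⟨⟨e.toEquiv.removeNone, fun {v w} => ?_⟩, fun v hv => ?_⟩
  · rw [← coneGraph_adj_some_some (S := S'), some_removeNone, some_removeNone, e.map_adj_iff,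
      coneGraph_adj_some_some]
  · change e.toEquiv.removeNone v ∈ S'
    rwa [← coneGraph_adj_none_some (G := G'), some_removeNone, ← he, e.map_adj_iff]

theorem exists_apply_inl_eq_of_sum_iso (f : G ⊕g H ≃g G' ⊕g H') {r : V} {r' : V'}
    (hr : f (.inl r) = .inl r') (hG : G.Preconnected) (v : V) : ∃ v', f (.inl v) = .inl v' := by
  have reachable : (G' ⊕g H').Reachable (.inl r') (f (.inl v)) :=
    hr ▸ ((hG r v).map Embedding.sumInl.toHom).map f.toHom
  rcases hv : f (.inl v) with v' | w'
  · exact ⟨v', rfl⟩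
  · rw [hv] at reachable
    exact (not_reachable_sum_inl_inr _ _ reachable).elim

theorem rootedIso_of_sum_iso (f : G ⊕g H ≃g G' ⊕g H') {r : V} {r' : V'}
    (hr : f (.inl r) = .inl r') (hG : G.Preconnected) (hG' : G'.Preconnected) :
    RootedIso G r G' r' := by
  choose g hg using exists_apply_inl_eq_of_sum_iso f hr hG
  choose g' hg' using exists_apply_inl_eq_of_sum_iso f.symm (f.symm_apply_eq.2 hr.symm) hG'
  have left_inv : Function.LeftInverse g' g := fun v =>
    Sum.inl_injective <| by rw [← hg', ← hg, f.symm_apply_apply]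
  have right_inv : Function.RightInverse g' g := fun v' =>
    Sum.inl_injective <| by rw [← hg, ← hg', f.apply_symm_apply]
  refine ⟨⟨⟨g, g', left_inv, right_inv⟩, fun {v w} => ?_⟩, Sum.inl_injective ((hg r).symm.trans hr)⟩
  change G'.Adj (g v) (g w) ↔ G.Adj v w
  rw [← sum_adj_inl (H := H'), ← hg, ← hg, f.map_adj_iff, sum_adj_inl]

theorem rootedIso_and_rootedIso_of_sum_iso (f : G ⊕g H ≃g G' ⊕g H')
    {r : V} {s : W} {r' : V'} {s' : W'} (hr : f (.inl r) = .inl r') (hs : f (.inr s) = .inr s')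
    (hG : G.Preconnected) (hH : H.Preconnected) (hG' : G'.Preconnected) (hH' : H'.Preconnected) :
    RootedIso G r G' r' ∧ RootedIso H s H' s' :=
  ⟨rootedIso_of_sum_iso f hr hG hG',
    rootedIso_of_sum_iso ((Iso.sumComm.trans f).trans Iso.sumComm) (by simp [hs]) hH hH'⟩

/-- The join of two rooted graphs: a new root `none` whose two branches are `(G, r)`
and `(H, s)`. -/
def joinGraph (G : SimpleGraph V) (r : V) (H : SimpleGraph W) (s : W) :
    SimpleGraph (Option (V ⊕ W)) :=
  coneGraph (G ⊕g H) {.inl r, .inr s}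

theorem isTree_joinGraph [Finite V] [Finite W] (hG : G.IsTree) (hH : H.IsTree) (r : V) (s : W) :
    (joinGraph G r H s).IsTree := by
  have connected : (joinGraph G r H s).Connected := by
    refine connected_coneGraph ?_
    rintro (v | w)
    · exact ⟨.inl r, by simp, (hG.connected.preconnected r v).map Embedding.sumInl.toHom⟩
    · exact ⟨.inr s, by simp, (hH.connected.preconnected s w).map Embedding.sumInr.toHom⟩
  have card_edges_le := ncard_edgeSet_coneGraph_le (G ⊕g H) {.inl r, .inr s}
  have card_edges_sum : (G ⊕g H).edgeSet.ncard = G.edgeSet.ncard + H.edgeSet.ncard := by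
    rw [← Nat.card_coe_set_eq, Nat.card_congr edgeSetSumEquiv, Nat.card_sum,
      Nat.card_coe_set_eq, Nat.card_coe_set_eq]
  have card_roots : ({.inl r, .inr s} : Set (V ⊕ W)).ncard = 2 := Set.ncard_pair Sum.inl_ne_inr
  have card_G := (isTree_iff_connected_and_card.1 hG).2
  have card_H := (isTree_iff_connected_and_card.1 hH).2
  rw [Nat.card_coe_set_eq] at card_G card_H
  refine isTree_of_connected_of_ncard_edgeSet_lt connected ?_
  rw [Finite.card_option, Nat.card_sum, joinGraph]
  omega

theorem ncard_leaves_joinGraph [Finite V] [Finite W] (G : SimpleGraph V) (r : V)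
    (H : SimpleGraph W) (s : W) :
    (leaves (joinGraph G r H s) none).ncard = (leaves G r).ncard + (leaves H s).ncard := by
  have leaves_eq : leaves (joinGraph G r H s) none =
      some '' (Sum.inl '' leaves G r ∪ Sum.inr '' leaves H s) := by
    rw [joinGraph, leaves_coneGraph _ (Set.insert_nonempty _ _)]
    congr 1
    classical
    ext (v | w) <;>
      simp [leaves, Set.indicator, Set.ncard_image_of_injective, Sum.inl_injective,
        Sum.inr_injective, neighborSet_sum_inl, neighborSet_sum_inr]
  rw [leaves_eq, Set.ncard_image_of_injective _ (Option.some_injective _),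
    Set.ncard_union_eq Set.disjoint_image_inl_image_inr,
    Set.ncard_image_of_injective _ Sum.inl_injective,
    Set.ncard_image_of_injective _ Sum.inr_injective]

theorem rootedIso_or_swap_of_rootedIso_joinGraph {r : V} {s : W} {r' : V'} {s' : W'}
    (hG : G.Preconnected) (hH : H.Preconnected) (hG' : G'.Preconnected) (hH' : H'.Preconnected)
    (h : RootedIso (joinGraph G r H s) none (joinGraph G' r' H' s') none) :
    (RootedIso G r G' r' ∧ RootedIso H s H' s') ∨
      (RootedIso G r H' s' ∧ RootedIso H s G' r') := by
  obtain ⟨f, hf⟩ := exists_iso_of_rootedIso_coneGraph h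
  have f_ne : f (.inl r) ≠ f (.inr s) := f.injective.ne Sum.inl_ne_inr
  rcases hf (.inl r) (by simp) with hr | hr <;> rcases hf (.inr s) (by simp) with hs | hs
  · exact (f_ne (hr.trans hs.symm)).elim
  · exact Or.inl (rootedIso_and_rootedIso_of_sum_iso f hr hs hG hH hG' hH')
  · refine Or.inr (rootedIso_and_rootedIso_of_sum_iso (f.trans Iso.sumComm) ?_ ?_ hG hH hH' hG')
    · exact congrArg Sum.swap hr
    · exact congrArg Sum.swap hs
  · exact (f_ne (hr.trans hs.symm)).elim

theorem leaves_starGraph [Finite V] [Nontrivial V] (r : V) : leaves (starGraph r) r = {r}ᶜ := by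
  ext v
  rcases eq_or_ne v r with rfl | hv
  · simp [root_mem_leaves_iff, (connected_starGraph v).preconnected.not_isIsolated v]
  · have neighborSet_eq : (starGraph r).neighborSet v = {r} := by
      ext w
      simp only [mem_neighborSet, starGraph_adj, Set.mem_singleton_iff]
      grind
    simp [mem_leaves_iff_of_ne hv, neighborSet_eq, hv]

end RootedGraphs


section Trees

instance (n : ℕ) : Finite (RTree n) :=
  Finite.of_injective (fun t : RTree n => (t.adj, t.root)) fun
    | ⟨_, _, _, _⟩, ⟨_, _, _, _⟩, rfl => rfl

theorem RTree.isTree {n : ℕ} (t : RTree n) : t.adj.IsTree := ⟨t.connected, t.acyclic⟩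

theorem RTree.isLeafV_iff_mem_leaves {n : ℕ} (t : RTree n) (v : Fin n) :
    IsLeafV t v ↔ v ∈ leaves t.adj t.root := by
  rcases Nat.lt_or_ge 1 n with hn | hn
  · have : Nontrivial (Fin n) := Fin.nontrivial_iff_two_le.2 hn
    rcases eq_or_ne v t.root with rfl | hv
    · simp [IsLeafV, hn.ne', root_mem_leaves_iff, t.connected.preconnected.not_isIsolated]
    · simp [IsLeafV, hn.ne', mem_leaves_iff_of_ne hv, hv]
  · have : Subsingleton (Fin n) := Fin.subsingleton_iff_le_one.2 hn
    have card_eq : n = 1 := le_antisymm hn (Fin.pos v)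
    simp [Subsingleton.elim v t.root, root_mem_leaves_iff, IsLeafV, card_eq,
      IsIsolated.of_subsingleton]

theorem RTree.numLeaves_eq {n : ℕ} (t : RTree n) :
    numLeaves t = (leaves t.adj t.root).ncard :=
  (Nat.card_congr (Equiv.subtypeEquivRight t.isLeafV_iff_mem_leaves)).trans
    (Nat.card_coe_set_eq _)

/-- Isomorphism classes of rooted trees with `n` vertices and `k` leaves, so that `aCount n k`
is their number. -/
abbrev IsoClass (n k : ℕ) : Type :=
  Quotient (Setoid.comap (Subtype.val : {t : RTree n // numLeaves t = k} → RTree n)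
    (treeSetoid n))

/-- Unlabelled rooted trees of all sizes: pairs of `(n, k)` and an isomorphism class of rooted
trees with `n` vertices and `k` leaves. -/
abbrev TreeClass : Type := Σ p : ℕ × ℕ, IsoClass p.1 p.2

namespace TreeClass

/-- The number of vertices. -/
def order (T : TreeClass) : ℕ := T.1.1

/-- The number of leaves. -/
def leafCount (T : TreeClass) : ℕ := T.1.2

/-- A labelled rooted tree chosen in the class `T`. -/
noncomputable def rep (T : TreeClass) : RTree T.order := (Quotient.out T.2).1

/-- The rooted graph `(G, r)` is a rooted tree belonging to the class `T`. -/
def Represents {V : Type*} (T : TreeClass) (G : SimpleGraph V) (r : V) : Prop :=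
  RootedIso T.rep.adj T.rep.root G r

theorem ncard_leaves_rep (T : TreeClass) :
    (leaves T.rep.adj T.rep.root).ncard = T.leafCount :=
  T.rep.numLeaves_eq.symm.trans (Quotient.out T.2).2

theorem leafCount_le_order (T : TreeClass) : T.leafCount ≤ T.order := by
  simpa [ncard_leaves_rep] using Set.ncard_le_card (leaves T.rep.adj T.rep.root)

variable {V : Type*} {G : SimpleGraph V} {r : V}

theorem Represents.order_eq {T : TreeClass} : T.Represents G r → T.order = Nat.card V := by
  rintro ⟨e, -⟩
  simpa using Nat.card_congr e.toEquiv

theorem Represents.leafCount_eq {T : TreeClass} (h : T.Represents G r) :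
    T.leafCount = (leaves G r).ncard :=
  T.ncard_leaves_rep.symm.trans (RootedIso.ncard_leaves_eq h)

theorem eq_of_represents_rep {T T' : TreeClass} (h : T.Represents T'.rep.adj T'.rep.root) :
    T = T' := by
  have order_eq : T.order = T'.order := by simpa using h.order_eq
  have leafCount_eq : T.leafCount = T'.leafCount := h.leafCount_eq.trans T'.ncard_leaves_rep
  obtain ⟨⟨n, k⟩, q⟩ := T
  obtain ⟨⟨n', k'⟩, q'⟩ := T'
  obtain rfl : n = n' := order_eq
  obtain rfl : k = k' := leafCount_eq
  exact congrArg (Sigma.mk (n, k)) (Quotient.out_equiv_out.1 h)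

theorem exists_represents [Finite V] (hG : G.IsTree) (r : V) :
    ∃ T : TreeClass, T.Represents G r := by
  let label : V ≃ Fin (Nat.card V) := Finite.equivFin V
  let e : G ≃g G.map label.toEmbedding := Iso.map label G
  let t : RTree (Nat.card V) :=
    ⟨_, e.connected_iff.1 hG.connected, e.isAcyclic_iff.1 hG.isAcyclic, label r⟩
  have out_equiv := Quotient.mk_out (s := Setoid.comap
    (Subtype.val : {t' : RTree _ // numLeaves t' = numLeaves t} → RTree _) (treeSetoid _)) ⟨t, rfl⟩
  exact ⟨⟨(Nat.card V, numLeaves t), Quotient.mk _ ⟨t, rfl⟩⟩,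
    RootedIso.trans out_equiv (RootedIso.symm ⟨e, rfl⟩)⟩

theorem exists_represents_joinGraph (p : TreeClass × TreeClass) :
    ∃ T : TreeClass, T.Represents
      (joinGraph p.1.rep.adj p.1.rep.root p.2.rep.adj p.2.rep.root) none :=
  exists_represents (isTree_joinGraph p.1.rep.isTree p.2.rep.isTree _ _) none

/-- The tree whose root has exactly two branches, the components of the pair `p`. -/
noncomputable def join (p : TreeClass × TreeClass) : TreeClass :=
  (exists_represents_joinGraph p).choose

theorem join_represents (p : TreeClass × TreeClass) : (join p).Represents
    (joinGraph p.1.rep.adj p.1.rep.root p.2.rep.adj p.2.rep.root) none :=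
  (exists_represents_joinGraph p).choose_spec

theorem order_join (p : TreeClass × TreeClass) :
    (join p).order = p.1.order + p.2.order + 1 := by
  simpa [Finite.card_option] using (join_represents p).order_eq

theorem leafCount_join (p : TreeClass × TreeClass) :
    (join p).leafCount = p.1.leafCount + p.2.leafCount := by
  rw [(join_represents p).leafCount_eq, ncard_leaves_joinGraph, ncard_leaves_rep,
    ncard_leaves_rep]

theorem eq_or_eq_swap_of_join_eq {p q : TreeClass × TreeClass} (h : join p = join q) :
    p = q ∨ p = q.swap := by
  have joins_iso := (join_represents p).symm.trans (h ▸ join_represents q)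
  have preconnected (T : TreeClass) : T.rep.adj.Preconnected := T.rep.connected.preconnected
  rcases rootedIso_or_swap_of_rootedIso_joinGraph (preconnected _) (preconnected _)
    (preconnected _) (preconnected _) joins_iso with ⟨h₁, h₂⟩ | ⟨h₁, h₂⟩
  · exact Or.inl (Prod.ext (eq_of_represents_rep h₁) (eq_of_represents_rep h₂))
  · exact Or.inr (Prod.ext (eq_of_represents_rep h₁) (eq_of_represents_rep h₂))

theorem encard_join_preimage_le (T : TreeClass) : (join ⁻¹' {T}).encard ≤ 2 := by
  rcases (join ⁻¹' {T}).eq_empty_or_nonempty with h | ⟨p, rfl⟩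
  · simp [h]
  · have subset_pair : join ⁻¹' {join p} ⊆ {p, p.swap} := fun _ => eq_or_eq_swap_of_join_eq
    calc (join ⁻¹' {join p}).encard ≤ Set.encard {p, p.swap} := Set.encard_le_encard subset_pair
      _ ≤ Set.encard {p.swap} + 1 := Set.encard_insert_le _ _
      _ = 2 := by rw [Set.encard_singleton, one_add_one_eq_two]

theorem exists_order_eq_leafCount_eq (m : ℕ) :
    ∃ T : TreeClass, T.order = m + 2 ∧ T.leafCount = m + 1 := by
  obtain ⟨T, hT⟩ := exists_represents (isTree_starGraph (0 : Fin (m + 2))) 0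
  refine ⟨T, by simpa using hT.order_eq, ?_⟩
  rw [hT.leafCount_eq, leaves_starGraph, Set.ncard_compl]
  simp

/-- Twice the number of leaves minus one more than the number of vertices. The shift by one makes
the excess additive under `join`. -/
def excess (T : TreeClass) : ℤ := 2 * T.leafCount - (T.order + 1)

theorem excess_join (p : TreeClass × TreeClass) :
    (join p).excess = p.1.excess + p.2.excess := by
  simp only [excess, order_join, leafCount_join]
  push_cast
  ring

theorem exists_excess_eq (d : ℤ) : ∃ T : TreeClass, T.excess = d := by
  have star (m : ℕ) : ∃ T : TreeClass, T.excess = m - 1 := by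
    obtain ⟨T, order_eq, leafCount_eq⟩ := exists_order_eq_leafCount_eq m
    refine ⟨T, ?_⟩
    rw [excess, order_eq, leafCount_eq]
    push_cast
    ring
  induction d with
  | zero => exact star 1
  | succ n ih =>
    obtain ⟨T, hT⟩ := ih
    obtain ⟨S, hS⟩ := star 2
    exact ⟨join (T, S), by rw [excess_join, hT, hS]; norm_num⟩
  | pred n ih =>
    obtain ⟨T, hT⟩ := ih
    obtain ⟨S, hS⟩ := star 0
    exact ⟨join (T, S), by rw [excess_join, hT, hS]; norm_num; ring⟩

theorem natAbs_excess_le (T : TreeClass) : T.excess.natAbs ≤ T.order + 1 := by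
  have := T.leafCount_le_order
  rw [excess]
  omega

theorem aCount_eq_zero {n k : ℕ} (h : n < k) : aCount n k = 0 :=
  Nat.card_eq_zero.2 <| Or.inl ⟨fun q =>
    h.not_ge (leafCount_le_order (⟨(n, k), q⟩ : TreeClass))⟩

end TreeClass

end Trees


open scoped ENNReal

section Supermultiplicative

theorem mul_le_of_superadditive {h : ℤ → ℝ} (hadd : ∀ d e, h d + h e ≤ h (d + e)) {n : ℤ}
    (hn : 0 < n) (d : ℤ) : n * h d ≤ h (n * d) := by
  induction n, hn using Int.leInduction with
  | base => simp
  | succ n _ ih =>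
    calc ((n + 1 : ℤ) : ℝ) * h d = n * h d + h d := by push_cast; ring
      _ ≤ h (n * d) + h d := by gcongr
      _ ≤ h ((n + 1) * d) := by rw [add_one_mul]; exact hadd _ _

theorem exists_le_mul_of_superadditive {h : ℤ → ℝ} (hadd : ∀ d e, h d + h e ≤ h (d + e)) :
    ∃ t : ℝ, ∀ d : ℤ, h d ≤ t * d := by
  have h_zero : h 0 ≤ 0 := by linarith [hadd 0 0, congrArg h (add_zero (0 : ℤ))]
  have slope_le {a b : ℤ} (ha : 0 < a) (hb : b < 0) : h a / a ≤ h b / b := by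
    have cancel : ((-b : ℤ) : ℝ) * h a + a * h b ≤ 0 :=
      calc ((-b : ℤ) : ℝ) * h a + a * h b ≤ h (-b * a) + h (a * b) :=
            add_le_add (mul_le_of_superadditive hadd (neg_pos.2 hb) a)
              (mul_le_of_superadditive hadd ha b)
        _ ≤ h (-b * a + a * b) := hadd _ _
        _ ≤ 0 := by rwa [show -b * a + a * b = 0 by ring]
    have ha' : (0 : ℝ) < a := Int.cast_pos.2 ha
    have hb' : (0 : ℝ) < -b := neg_pos.2 (Int.cast_lt_zero.2 hb)
    rw [← neg_div_neg_eq (h b), div_le_div_iff₀ ha' hb']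
    push_cast at cancel
    linarith
  obtain ⟨t, ht_pos, ht_neg⟩ := exists_between_of_forall_le
    (s := (fun d : ℤ => h d / d) '' Set.Ioi 0) (t := (fun d : ℤ => h d / d) '' Set.Iio 0)
    ⟨_, 1, by simp, rfl⟩ ⟨_, -1, by simp, rfl⟩
    (by rintro _ ⟨a, ha, rfl⟩ _ ⟨b, hb, rfl⟩; exact slope_le ha hb)
  refine ⟨t, fun d => ?_⟩
  rcases lt_trichotomy d 0 with hd | rfl | hd
  · exact (le_div_iff_of_neg (Int.cast_lt_zero.2 hd)).1 (ht_neg ⟨d, hd, rfl⟩)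
  · simpa using h_zero
  · exact (div_le_iff₀ (Int.cast_pos.2 hd)).1 (ht_pos ⟨d, hd, rfl⟩)

theorem exists_mul_zpow_le_one_of_supermultiplicative {F : ℤ → ℝ} (hpos : ∀ d, 0 < F d)
    (hmul : ∀ d e, F d * F e ≤ F (d + e)) : ∃ u : ℝ, 0 < u ∧ ∀ d, F d * u ^ d ≤ 1 := by
  obtain ⟨t, ht⟩ := exists_le_mul_of_superadditive (h := fun d => Real.log (F d)) fun d e => by
    rw [← Real.log_mul (hpos d).ne' (hpos e).ne']
    exact Real.log_le_log (mul_pos (hpos d) (hpos e)) (hmul d e)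
  refine ⟨Real.exp (-t), Real.exp_pos _, fun d => ?_⟩
  have F_le : F d ≤ Real.exp (t * d) := (Real.log_le_iff_le_exp (hpos d)).1 (ht d)
  calc F d * Real.exp (-t) ^ d ≤ Real.exp (t * d) * Real.exp (-t) ^ d := by gcongr
    _ = 1 := by
      rw [← Real.rpow_intCast, ← Real.exp_mul, ← Real.exp_add, Real.exp_eq_one_iff]
      ring

theorem exists_mul_ofReal_zpow_le_one {F : ℤ → ℝ≥0∞} (hne : ∀ d, F d ≠ 0)
    (hzero : F 0 ≠ ∞) (hmul : ∀ d e, F d * F e ≤ F (d + e)) :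
    ∃ u : ℝ, 0 < u ∧ ∀ d, F d * ENNReal.ofReal (u ^ d) ≤ 1 := by
  have hfin (d : ℤ) : F d ≠ ∞ := fun htop => hzero <| top_le_iff.1 <| by
    simpa [htop, ENNReal.top_mul (hne (-d))] using hmul d (-d)
  obtain ⟨u, hu, hle⟩ := exists_mul_zpow_le_one_of_supermultiplicative
    (F := fun d => (F d).toReal) (fun d => ENNReal.toReal_pos (hne d) (hfin d)) fun d e => by
      rw [← ENNReal.toReal_mul]
      exact ENNReal.toReal_mono (hfin _) (hmul d e)
  refine ⟨u, hu, fun d => ?_⟩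
  rw [← ENNReal.ofReal_toReal (hfin d), ← ENNReal.ofReal_mul ENNReal.toReal_nonneg]
  exact ENNReal.ofReal_le_one.2 (hle d)

end Supermultiplicative

section Sums

theorem summable_pow_natAbs {q : ℝ} (h₀ : 0 ≤ q) (h₁ : q < 1) :
    Summable fun d : ℤ => q ^ d.natAbs := by
  have := summable_geometric_of_lt_one h₀ h₁
  exact .of_nat_of_neg (by simpa using this) (by simpa using this)

theorem tsum_comp_le_mul_tsum {α β : Type*} {f : α → β} {m : ℕ∞}
    (hf : ∀ b, (f ⁻¹' {b}).encard ≤ m) (h : β → ℝ≥0∞) :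
    ∑' a, h (f a) ≤ m * ∑' b, h b := by
  rw [← ENNReal.tsum_fiberwise (fun a => h (f a)) f, ← ENNReal.tsum_mul_left]
  refine ENNReal.tsum_le_tsum fun b => ?_
  calc ∑' a : f ⁻¹' {b}, h (f a) = ∑' _ : f ⁻¹' {b}, h b := tsum_congr fun a => congrArg h a.2
    _ = ENat.card (f ⁻¹' {b}) * h b := ENNReal.tsum_const _
    _ ≤ m * h b := by gcongr; exact hf b

end Sums


namespace TreeClass

section Weight

/-- The weight `y ^ (n + 1) * u ^ excess / 2` of a tree with `n` vertices. For `y = x √ζ` and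
`u = √ζ` it is `x ^ n * ζ ^ k` up to the constant `x / 2`; the factor `1 / 2` makes up for `join`
being two-to-one. -/
noncomputable def weight (y u : ℝ) (T : TreeClass) : ℝ≥0∞ :=
  ENNReal.ofReal (y ^ (T.order + 1) * u ^ T.excess / 2)

/-- The total weight of the trees in `s`, possibly infinite. -/
noncomputable def series (s : Set TreeClass) (y u : ℝ) : ℝ≥0∞ :=
  ∑' T : s, weight y u T

variable {y y' u v : ℝ} {r s t : Set TreeClass}

theorem weight_ne_zero (hy : 0 < y) (hu : 0 < u) (T : TreeClass) : weight y u T ≠ 0 := by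
  have : 0 < y ^ (T.order + 1) * u ^ T.excess / 2 := by positivity
  exact (ENNReal.ofReal_pos.2 this).ne'

theorem weight_join (hy : 0 < y) (hu : 0 < u) (p : TreeClass × TreeClass) :
    weight y u (join p) = 2 * (weight y u p.1 * weight y u p.2) := by
  rw [weight, weight, weight, ← ENNReal.ofReal_mul (by positivity), ← ENNReal.ofReal_ofNat 2,
    ← ENNReal.ofReal_mul zero_le_two, order_join, excess_join, zpow_add₀ hu.ne']
  ring_nf

theorem weight_mul_zpow (hu : 0 < u) (T : TreeClass) :
    weight y (v * u) T = weight y v T * ENNReal.ofReal (u ^ T.excess) := by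
  rw [weight, weight, ← ENNReal.ofReal_mul' (by positivity), mul_zpow]
  ring_nf

theorem weight_le_ofReal_mul_weight (hy' : 0 < y') (h : y' ≤ y) (hu : 0 < u) (T : TreeClass) :
    weight y' u T ≤ ENNReal.ofReal ((y' / y) ^ T.excess.natAbs) * weight y u T := by
  have hy : 0 < y := hy'.trans_le h
  have pow_le : (y' / y) ^ (T.order + 1) ≤ (y' / y) ^ T.excess.natAbs :=
    pow_le_pow_of_le_one (by positivity) (div_le_one_of_le₀ h hy.le) T.natAbs_excess_le
  rw [weight, weight, ← ENNReal.ofReal_mul (by positivity)]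
  refine ENNReal.ofReal_le_ofReal ?_
  calc y' ^ (T.order + 1) * u ^ T.excess / 2
      = (y' / y) ^ (T.order + 1) * (y ^ (T.order + 1) * u ^ T.excess / 2) := by
        rw [div_pow]
        field_simp
    _ ≤ (y' / y) ^ T.excess.natAbs * (y ^ (T.order + 1) * u ^ T.excess / 2) := by gcongr

theorem weight_le_series {T : TreeClass} (hT : T ∈ s) : weight y u T ≤ series s y u :=
  ENNReal.le_tsum (f := fun S : s => weight y u S) ⟨T, hT⟩

theorem series_mono_set (h : s ⊆ t) : series s y u ≤ series t y u :=
  ENNReal.tsum_mono_subtype _ h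

theorem series_mono_left (hy : 0 ≤ y) (h : y ≤ y') (hu : 0 < u) :
    series s y u ≤ series s y' u :=
  ENNReal.tsum_le_tsum fun T => ENNReal.ofReal_le_ofReal <| by gcongr

theorem series_univ (y u : ℝ) : series Set.univ y u = ∑' T, weight y u T :=
  tsum_univ _

theorem series_mul_le (hy : 0 < y) (hu : 0 < u) (h : ∀ S ∈ s, ∀ T ∈ t, join (S, T) ∈ r) :
    series s y u * series t y u ≤ series r y u := by
  let f (p : s × t) : r := ⟨join (p.1, p.2), h _ p.1.2 _ p.2.2⟩
  have encard_fiber_le (R : r) : (f ⁻¹' {R}).encard ≤ 2 := by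
    refine (Set.encard_le_encard_of_injOn (t := join ⁻¹' {R.1}) (f := Prod.map (↑) (↑)) ?_ ?_).trans
      (encard_join_preimage_le R)
    · rintro p hp
      exact congrArg Subtype.val hp
    · exact (Subtype.val_injective.prodMap Subtype.val_injective).injOn
  refine (ENNReal.mul_le_mul_iff_right two_ne_zero ENNReal.ofNat_ne_top).1 ?_
  calc 2 * (series s y u * series t y u)
      = ∑' p : s × t, weight y u (f p) := by
        simp only [f, weight_join hy hu, ENNReal.tsum_mul_left, ENNReal.tsum_mul_right,
          ENNReal.tsum_prod', series]
    _ ≤ 2 * series r y u := tsum_comp_le_mul_tsum encard_fiber_le fun R => weight y u R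

end Weight

section Level

variable {y y' u v : ℝ}

/-- The trees of excess `d`. -/
def level (d : ℤ) : Set TreeClass := excess ⁻¹' {d}

theorem series_level_mul_le (hy : 0 < y) (hu : 0 < u) (d e : ℤ) :
    series (level d) y u * series (level e) y u ≤ series (level (d + e)) y u :=
  series_mul_le hy hu fun S hS T hT => by
    obtain rfl : S.excess = d := hS
    obtain rfl : T.excess = e := hT
    exact excess_join (S, T)

theorem series_level_ne_zero (hy : 0 < y) (hu : 0 < u) (d : ℤ) : series (level d) y u ≠ 0 := by
  obtain ⟨T, hT⟩ := exists_excess_eq d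
  exact (pos_iff_ne_zero.2 (weight_ne_zero hy hu T)).trans_le (weight_le_series hT) |>.ne'

theorem series_level_mul_zpow (hu : 0 < u) (d : ℤ) :
    series (level d) y (v * u) = series (level d) y v * ENNReal.ofReal (u ^ d) := by
  rw [series, series, ← ENNReal.tsum_mul_right]
  refine tsum_congr fun T => ?_
  rw [weight_mul_zpow hu, show T.1.excess = d from T.2]

theorem series_level_zero_le_one (hy : 0 < y) (hu : 0 < u) (h : series (level 0) y u ≠ ∞) :
    series (level 0) y u ≤ 1 := by
  have mul_self_le : series (level 0) y u * series (level 0) y u ≤ series (level 0) y u * 1 := by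
    simpa using series_level_mul_le hy hu 0 0
  exact (ENNReal.mul_le_mul_iff_right (series_level_ne_zero hy hu 0) h).1 mul_self_le

theorem le_two_of_series_univ_ne_top (hy : 0 < y) (hu : 0 < u) (h : series Set.univ y u ≠ ∞) :
    y ≤ 2 := by
  obtain ⟨T, hT⟩ := exists_excess_eq 0
  have weight_le_one : weight y u T ≤ 1 := (weight_le_series hT).trans <|
    series_level_zero_le_one hy hu (ne_top_of_le_ne_top h (series_mono_set (Set.subset_univ _)))
  have pow_le_two : y ^ (T.order + 1) ≤ 2 := by
    rw [weight, hT, zpow_zero, mul_one, ENNReal.ofReal_le_one] at weight_le_one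
    linarith
  by_contra! hlt
  exact (hlt.trans_le (le_self_pow₀ (by linarith) T.order.succ_ne_zero)).not_ge pow_le_two

theorem exists_series_univ_ne_top (hy' : 0 < y') (h : y' < y) (hv : 0 < v)
    (hzero : series (level 0) y v ≠ ∞) : ∃ u : ℝ, 0 < u ∧ series Set.univ y' u ≠ ∞ := by
  have hy : 0 < y := hy'.trans h
  obtain ⟨w, hw, level_le⟩ := exists_mul_ofReal_zpow_le_one
    (F := fun d => series (level d) y v) (series_level_ne_zero hy hv) hzero
    (series_level_mul_le hy hv)
  refine ⟨v * w, mul_pos hv hw, ne_top_of_le_ne_top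
    (summable_pow_natAbs (div_pos hy' hy).le ((div_lt_one hy).2 h)).tsum_ofReal_ne_top ?_⟩
  calc series Set.univ y' (v * w) = ∑' T, weight y' (v * w) T := series_univ _ _
    _ ≤ ∑' T : TreeClass,
          ENNReal.ofReal ((y' / y) ^ T.excess.natAbs) * weight y (v * w) T :=
        ENNReal.tsum_le_tsum (weight_le_ofReal_mul_weight hy' h.le (mul_pos hv hw))
    _ = ∑' d : ℤ, ENNReal.ofReal ((y' / y) ^ d.natAbs) * series (level d) y (v * w) := by
        rw [← ENNReal.tsum_fiberwise _ excess]
        refine tsum_congr fun d => ?_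
        rw [series, ← ENNReal.tsum_mul_left]
        exact tsum_congr fun T => by rw [show T.1.excess = d from T.2]
    _ ≤ ∑' d : ℤ, ENNReal.ofReal ((y' / y) ^ d.natAbs) := by
        refine ENNReal.tsum_le_tsum fun d => mul_le_of_le_one_right' ?_
        rw [series_level_mul_zpow hw]
        exact level_le d

theorem series_level_eq_top (hy' : 0 < y') (h : y' < y) (hu : 0 < u)
    (htop : ∀ v : ℝ, 0 < v → series Set.univ y' v = ∞) (d : ℤ) : series (level d) y u = ∞ := by
  have hy : 0 < y := hy'.trans h
  have level_zero_eq_top : series (level 0) y u = ∞ := by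
    by_contra hzero
    obtain ⟨v, hv, hne⟩ := exists_series_univ_ne_top hy' h hu hzero
    exact hne (htop v hv)
  have mul_le := series_level_mul_le hy hu 0 d
  rwa [level_zero_eq_top, ENNReal.top_mul (series_level_ne_zero hy hu d), zero_add,
    top_le_iff] at mul_le

end Level

section Halves

variable {y u v : ℝ}

/-- The trees of negative excess, that is, with `2 * k ≤ n`. -/
def lower : Set TreeClass := {T | T.excess < 0}

/-- The trees of nonnegative excess, that is, with `n < 2 * k`. -/
def upper : Set TreeClass := {T | 0 ≤ T.excess}

theorem mem_lower_iff {T : TreeClass} : T ∈ lower ↔ 2 * T.leafCount ≤ T.order := by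
  rw [lower, Set.mem_ofPred_eq, excess]
  omega

theorem mem_upper_iff {T : TreeClass} : T ∈ upper ↔ T.order < 2 * T.leafCount := by
  rw [upper, Set.mem_ofPred_eq, excess]
  omega

theorem series_univ_eq_lower_add_upper (y u : ℝ) :
    series Set.univ y u = series lower y u + series upper y u := by
  have upper_eq : upper = lowerᶜ := by ext; simp [upper, lower]
  rw [series_univ, upper_eq]
  exact (ENNReal.summable.tsum_add_tsum_compl ENNReal.summable).symm

theorem series_lower_anti (hy : 0 ≤ y) (hu : 0 < u) (h : u ≤ v) :
    series lower y v ≤ series lower y u :=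
  ENNReal.tsum_le_tsum fun T => ENNReal.ofReal_le_ofReal <| by
    have zpow_le : v ^ T.1.excess ≤ u ^ T.1.excess := by
      have excess_neg : T.1.excess < 0 := T.2
      rw [← inv_le_inv₀ (zpow_pos hu _) (zpow_pos (hu.trans_le h) _), ← zpow_neg, ← zpow_neg]
      exact zpow_le_zpow_left₀ (neg_nonneg.2 excess_neg.le) hu.le h
    gcongr

theorem series_upper_mono (hy : 0 ≤ y) (hu : 0 < u) (h : u ≤ v) :
    series upper y u ≤ series upper y v :=
  ENNReal.tsum_le_tsum fun T => ENNReal.ofReal_le_ofReal <| by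
    have zpow_le : u ^ T.1.excess ≤ v ^ T.1.excess := zpow_le_zpow_left₀ T.2 hu.le h
    gcongr

end Halves

end TreeClass


section GeneratingFunctions

open TreeClass

variable {x ζ : ℝ}

theorem tsum_treeClass_ofReal {f : ℕ × ℕ → ℝ} :
    ∑' T : TreeClass, ENNReal.ofReal (f T.1) =
      ∑' p : ℕ × ℕ, ENNReal.ofReal (aCount p.1 p.2 * f p) := by
  rw [ENNReal.tsum_sigma']
  refine tsum_congr fun p => ?_
  calc ∑' _ : IsoClass p.1 p.2, ENNReal.ofReal (f p)
      = ENat.card (IsoClass p.1 p.2) * ENNReal.ofReal (f p) := ENNReal.tsum_const _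
    _ = aCount p.1 p.2 * ENNReal.ofReal (f p) := by
        rw [ENat.card_eq_coe_natCard, ENat.toENNReal_coe, aCount]
    _ = ENNReal.ofReal (aCount p.1 p.2 * f p) := by
        rw [ENNReal.ofReal_mul (Nat.cast_nonneg _), ENNReal.ofReal_natCast]

theorem summable_aCount_mul_iff {f : ℕ × ℕ → ℝ} (hf : ∀ p, 0 ≤ f p) :
    Summable (fun p : ℕ × ℕ => aCount p.1 p.2 * f p) ↔
      ∑' T : TreeClass, ENNReal.ofReal (f T.1) ≠ ∞ := by
  rw [tsum_treeClass_ofReal]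
  refine ⟨Summable.tsum_ofReal_ne_top, fun h => (ENNReal.summable_toReal h).congr fun p => ?_⟩
  exact ENNReal.toReal_ofReal (mul_nonneg (Nat.cast_nonneg _) (hf p))

theorem weight_mul_sqrt (hx : 0 < x) (hζ : 0 < ζ) (T : TreeClass) :
    weight (x * √ζ) √ζ T =
      ENNReal.ofReal (x / 2) * ENNReal.ofReal (x ^ T.order * ζ ^ T.leafCount) := by
  have hs : 0 < √ζ := Real.sqrt_pos.2 hζ
  have sqrt_pow : √ζ ^ (T.order + 1) * √ζ ^ T.excess = ζ ^ T.leafCount := by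
    rw [← zpow_natCast √ζ (T.order + 1), ← zpow_add₀ hs.ne', excess, Nat.cast_succ,
      add_sub_cancel, zpow_mul, zpow_natCast, zpow_ofNat, Real.sq_sqrt hζ.le]
  rw [weight, ← ENNReal.ofReal_mul (by positivity), ← sqrt_pow]
  ring_nf

theorem summable_aCount_ite_iff (hx : 0 < x) (hζ : 0 < ζ) (P : ℕ → ℕ → Prop)
    [∀ n k, Decidable (P n k)] :
    Summable (fun p : ℕ × ℕ =>
        aCount p.1 p.2 * if P p.1 p.2 then x ^ p.1 * ζ ^ p.2 else 0) ↔
      series {T | P T.order T.leafCount} (x * √ζ) √ζ ≠ ∞ := by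
  have series_eq : series {T | P T.order T.leafCount} (x * √ζ) √ζ = ENNReal.ofReal (x / 2) *
      ∑' T : TreeClass, ENNReal.ofReal
        (if P T.order T.leafCount then x ^ T.order * ζ ^ T.leafCount else 0) := by
    rw [series, tsum_subtype, ← ENNReal.tsum_mul_left]
    refine tsum_congr fun T => ?_
    by_cases hT : P T.order T.leafCount
    · simp [hT, weight_mul_sqrt hx hζ]
    · simp [hT]
  have mul_eq_top (S : ℝ≥0∞) : ENNReal.ofReal (x / 2) * S = ∞ ↔ S = ∞ := by
    simp [ENNReal.mul_eq_top, hx]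
  rw [series_eq, ne_eq, mul_eq_top]
  exact summable_aCount_mul_iff (f := fun p => if P p.1 p.2 then x ^ p.1 * ζ ^ p.2 else 0)
    fun p => by split_ifs <;> positivity

theorem summable_aCount_iff (hx : 0 < x) (hζ : 0 < ζ) :
    Summable (fun p : ℕ × ℕ => (aCount p.1 p.2 : ℝ) * x ^ p.1 * ζ ^ p.2) ↔
      series Set.univ (x * √ζ) √ζ ≠ ∞ := by
  simpa [mul_assoc] using summable_aCount_ite_iff hx hζ fun _ _ => True

theorem summable_tsum_aCount_ite_iff (hx : 0 < x) (hζ : 0 < ζ) (P : ℕ → ℕ → Prop)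
    [∀ n k, Decidable (P n k)] :
    Summable (fun n : ℕ => (∑' k : ℕ, if P n k then (aCount n k : ℝ) * ζ ^ k else 0) * x ^ n) ↔
      series {T | P T.order T.leafCount} (x * √ζ) √ζ ≠ ∞ := by
  have terms_nonneg (p : ℕ × ℕ) :
      0 ≤ (aCount p.1 p.2 : ℝ) * if P p.1 p.2 then x ^ p.1 * ζ ^ p.2 else 0 := by
    split_ifs <;> positivity
  have summable_row (n : ℕ) :
      Summable fun k : ℕ => (aCount n k : ℝ) * if P n k then x ^ n * ζ ^ k else 0 :=
    summable_of_ne_finset_zero (s := Finset.range (n + 1)) fun k hk => by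
      simp [aCount_eq_zero (n := n) (k := k) (by simpa using hk)]
  rw [← summable_aCount_ite_iff hx hζ, summable_prod_of_nonneg terms_nonneg,
    and_iff_right summable_row]
  refine summable_congr fun n => ?_
  rw [← tsum_mul_right]
  exact tsum_congr fun k => by split_ifs <;> ring

theorem summable_aMinusP_iff (hx : 0 < x) (hζ : 0 < ζ) :
    Summable (fun n : ℕ => aMinusP n ζ * x ^ n) ↔ series lower (x * √ζ) √ζ ≠ ∞ := by
  rw [show lower = {T | 2 * T.leafCount ≤ T.order} from Set.ext fun _ => mem_lower_iff]
  exact summable_tsum_aCount_ite_iff hx hζ fun n k => 2 * k ≤ n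

theorem summable_aPlusP_iff (hx : 0 < x) (hζ : 0 < ζ) :
    Summable (fun n : ℕ => aPlusP n ζ * x ^ n) ↔ series upper (x * √ζ) √ζ ≠ ∞ := by
  rw [show upper = {T | T.order < 2 * T.leafCount} from Set.ext fun _ => mem_upper_iff]
  exact summable_tsum_aCount_ite_iff hx hζ fun n k => n < 2 * k

end GeneratingFunctions

section Rhat

open TreeClass

variable {y ζ ω z₀ a b c : ℝ}

theorem rhat_nonneg (ω : ℝ) : 0 ≤ rhat ω :=
  mul_nonneg (Real.sSup_nonneg fun _ hx => hx.1.le) (Real.sqrt_nonneg _)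

theorem series_univ_ne_top_of_lt_rhat (hω : 0 < ω) (hy : 0 ≤ y) (h : y < rhat ω) :
    series Set.univ y √ω ≠ ∞ := by
  have hs : 0 < √ω := Real.sqrt_pos.2 hω
  have lt_rFun : y / √ω < rFun ω := (div_lt_iff₀ hs).2 h
  have nonempty : {x : ℝ | 0 < x ∧
      Summable (fun p : ℕ × ℕ => (aCount p.1 p.2 : ℝ) * x ^ p.1 * ω ^ p.2)}.Nonempty := by
    by_contra! hempty
    rw [rFun, hempty, Real.sSup_empty] at lt_rFun
    exact lt_rFun.not_ge (div_nonneg hy hs.le)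
  obtain ⟨x, ⟨hx, summable⟩, lt_x⟩ := exists_lt_of_lt_csSup nonempty lt_rFun
  exact ne_top_of_le_ne_top ((summable_aCount_iff hx hω).1 summable)
    (series_mono_left hy ((div_lt_iff₀ hs).1 lt_x).le hs)

theorem series_univ_eq_top_of_rhat_lt (hω : 0 < ω) (h : rhat ω < y) :
    series Set.univ y √ω = ∞ := by
  have hs : 0 < √ω := Real.sqrt_pos.2 hω
  have hx : 0 < y / √ω := div_pos ((rhat_nonneg ω).trans_lt h) hs
  by_contra hne
  have summable := (summable_aCount_iff hx hω).2 (by rwa [div_mul_cancel₀ _ hs.ne'])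
  have bddAbove : BddAbove {x : ℝ | 0 < x ∧
      Summable (fun p : ℕ × ℕ => (aCount p.1 p.2 : ℝ) * x ^ p.1 * ω ^ p.2)} :=
    ⟨2 / √ω, fun x hx => (le_div_iff₀ hs).2 <|
      le_two_of_series_univ_ne_top (mul_pos hx.1 hs) hs ((summable_aCount_iff hx.1 hω).1 hx.2)⟩
  exact h.not_ge ((div_le_iff₀ hs).1 (le_csSup bddAbove ⟨hx, summable⟩))

theorem series_lower_ne_top_of_lt_rhat (hω : 0 < ω) (hωζ : ω ≤ ζ) (hy : 0 ≤ y)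
    (h : y < rhat ω) : series lower y √ζ ≠ ∞ :=
  ne_top_of_le_ne_top (series_univ_ne_top_of_lt_rhat hω hy h) <|
    (series_lower_anti hy (Real.sqrt_pos.2 hω) (Real.sqrt_le_sqrt hωζ)).trans
      (series_mono_set (Set.subset_univ _))

theorem series_upper_ne_top_of_lt_rhat (hζ : 0 < ζ) (hζω : ζ ≤ ω) (hy : 0 ≤ y)
    (h : y < rhat ω) : series upper y √ζ ≠ ∞ :=
  ne_top_of_le_ne_top (series_univ_ne_top_of_lt_rhat (hζ.trans_le hζω) hy h) <|
    (series_upper_mono hy (Real.sqrt_pos.2 hζ) (Real.sqrt_le_sqrt hζω)).trans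
      (series_mono_set (Set.subset_univ _))

theorem series_lower_eq_top_or_series_upper_eq_top (hζ : 0 < ζ) (h : rhat ζ < y) :
    series lower y √ζ = ∞ ∨ series upper y √ζ = ∞ := by
  rw [← ENNReal.add_eq_top, ← series_univ_eq_lower_add_upper]
  exact series_univ_eq_top_of_rhat_lt hζ h

theorem min_rhat_le (ha : 0 < a) (hab : a ≤ b) (hbc : b ≤ c) :
    min (rhat a) (rhat c) ≤ rhat b := by
  by_contra! hlt
  obtain ⟨y, hby, hyac⟩ := exists_between hlt
  have hb : 0 < b := ha.trans_le hab
  have hy : 0 ≤ y := (rhat_nonneg b).trans hby.le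
  exact (series_lower_eq_top_or_series_upper_eq_top hb hby).elim
    (series_lower_ne_top_of_lt_rhat ha hab hy (hyac.trans_le (min_le_left _ _)))
    (series_upper_ne_top_of_lt_rhat hb hbc hy (hyac.trans_le (min_le_right _ _)))

theorem series_lower_eq_top_of_rhat_lt_of_le (hζ : 0 < ζ) (hζω : ζ ≤ ω) (h : rhat ζ < y)
    (hyω : y ≤ rhat ω) : series lower y √ζ = ∞ := by
  obtain ⟨y', hζy', hy'y⟩ := exists_between h
  have hy' : 0 ≤ y' := (rhat_nonneg ζ).trans hζy'.le
  have lower_eq_top := (series_lower_eq_top_or_series_upper_eq_top hζ hζy').resolve_right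
    (series_upper_ne_top_of_lt_rhat hζ hζω hy' (hy'y.trans_le hyω))
  exact eq_top_mono (series_mono_left hy' hy'y.le (Real.sqrt_pos.2 hζ)) lower_eq_top

theorem series_upper_eq_top_of_rhat_lt_of_le (hω : 0 < ω) (hωζ : ω ≤ ζ) (h : rhat ζ < y)
    (hyω : y ≤ rhat ω) : series upper y √ζ = ∞ := by
  have hζ : 0 < ζ := hω.trans_le hωζ
  obtain ⟨y', hζy', hy'y⟩ := exists_between h
  have hy' : 0 ≤ y' := (rhat_nonneg ζ).trans hζy'.le
  have upper_eq_top := (series_lower_eq_top_or_series_upper_eq_top hζ hζy').resolve_left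
    (series_lower_ne_top_of_lt_rhat hω hωζ hy' (hy'y.trans_le hyω))
  exact eq_top_mono (series_mono_left hy' hy'y.le (Real.sqrt_pos.2 hζ)) upper_eq_top

theorem series_level_eq_top_of_isMaxOn (hmax : IsMaxOn rhat (Set.Ioi 0) z₀) (h : rhat z₀ < y)
    (hζ : 0 < ζ) (d : ℤ) : series (level d) y √ζ = ∞ := by
  obtain ⟨y', hz₀y', hy'y⟩ := exists_between h
  refine series_level_eq_top ((rhat_nonneg _).trans_lt hz₀y') hy'y (Real.sqrt_pos.2 hζ) ?_ d
  intro v hv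
  have hv_sq : 0 < v ^ 2 := pow_pos hv 2
  simpa only [Real.sqrt_sq hv.le] using
    series_univ_eq_top_of_rhat_lt hv_sq ((isMaxOn_iff.1 hmax _ hv_sq).trans_lt hz₀y')

theorem series_lower_eq_top_of_isMaxOn (hmax : IsMaxOn rhat (Set.Ioi 0) z₀) (hζ : 0 < ζ)
    (h : rhat (min ζ z₀) < y) : series lower y √ζ = ∞ := by
  rcases lt_or_ge (rhat z₀) y with hy | hy
  · have level_subset : level (-1) ⊆ lower := by
      rintro T (hT : T.excess = -1)
      exact hT.trans_lt neg_one_lt_zero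
    exact eq_top_mono (series_mono_set level_subset)
      (series_level_eq_top_of_isMaxOn hmax hy hζ (-1))
  · rcases le_total ζ z₀ with hζz₀ | hζz₀
    · exact series_lower_eq_top_of_rhat_lt_of_le hζ hζz₀ (min_eq_left hζz₀ ▸ h) hy
    · exact (hy.not_gt (min_eq_right hζz₀ ▸ h)).elim

theorem series_upper_eq_top_of_isMaxOn (hmax : IsMaxOn rhat (Set.Ioi 0) z₀) (hz₀ : 0 < z₀)
    (hζ : 0 < ζ) (h : rhat (max z₀ ζ) < y) : series upper y √ζ = ∞ := by
  rcases lt_or_ge (rhat z₀) y with hy | hy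
  · have level_subset : level 0 ⊆ upper := by
      rintro T (hT : T.excess = 0)
      exact hT.ge
    exact eq_top_mono (series_mono_set level_subset)
      (series_level_eq_top_of_isMaxOn hmax hy hζ 0)
  · rcases le_total z₀ ζ with hz₀ζ | hz₀ζ
    · exact series_upper_eq_top_of_rhat_lt_of_le hz₀ hz₀ζ (max_eq_right hz₀ζ ▸ h) hy
    · exact (hy.not_gt (max_eq_left hz₀ζ ▸ h)).elim

theorem isGreatest_rhat_image_Ioc (hmax : IsMaxOn rhat (Set.Ioi 0) z₀) (hz₀ : 0 < z₀)
    (hζ : 0 < ζ) : IsGreatest (rhat '' Set.Ioc 0 ζ) (rhat (min ζ z₀)) := by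
  refine ⟨⟨_, ⟨lt_min hζ hz₀, min_le_left _ _⟩, rfl⟩, ?_⟩
  rintro _ ⟨ω, ⟨hω, hωζ⟩, rfl⟩
  have rhat_le : rhat ω ≤ rhat z₀ := isMaxOn_iff.1 hmax ω hω
  rcases le_total ζ z₀ with h | h
  · simpa [h, rhat_le] using min_rhat_le hω hωζ h
  · rwa [min_eq_right h]

theorem isGreatest_rhat_image_Ici (hmax : IsMaxOn rhat (Set.Ioi 0) z₀) (hz₀ : 0 < z₀)
    (hζ : 0 < ζ) : IsGreatest (rhat '' Set.Ici ζ) (rhat (max z₀ ζ)) := by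
  refine ⟨⟨_, Set.mem_Ici.2 (le_max_right _ _), rfl⟩, ?_⟩
  rintro _ ⟨ω, hζω : ζ ≤ ω, rfl⟩
  have rhat_le : rhat ω ≤ rhat z₀ := isMaxOn_iff.1 hmax ω (hζ.trans_le hζω)
  rcases le_total z₀ ζ with h | h
  · simpa [h, rhat_le] using min_rhat_le hz₀ h hζω
  · rwa [max_eq_left h]

end Rhat

/-- Proposition 5: if `r̂` attains its maximum at `z₀ > 0` (with `x₀ = r̂(z₀)`),
then `r̂_−(ζ) = max_{0<ω≤ζ} r̂(ω)` equals `r̂(ζ)` for `ζ ≤ z₀` and `x₀` for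
`ζ ≥ z₀`, `r̂_+(ζ) = sup_{ω≥ζ} r̂(ω)` equals `r̂(ζ)` for `ζ ≥ z₀` and `x₀` for
`ζ ≤ z₀`, and the radii of convergence of `Σ_n a_n^−(ζ) x^n` and
`Σ_n a_n^+(ζ) x^n` are `r̂_−(ζ)/√ζ` and `r̂_+(ζ)/√ζ` respectively. -/
theorem proposition5 (z₀ : ℝ) (hz₀ : 0 < z₀)
    (hmax : ∀ ζ : ℝ, 0 < ζ → rhat ζ ≤ rhat z₀)
    (ζ : ℝ) (hζ : 0 < ζ) :
    (sSup {y : ℝ | ∃ ω : ℝ, 0 < ω ∧ ω ≤ ζ ∧ y = rhat ω} =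
      if ζ ≤ z₀ then rhat ζ else rhat z₀) ∧
    (sSup {y : ℝ | ∃ ω : ℝ, ζ ≤ ω ∧ y = rhat ω} =
      if z₀ ≤ ζ then rhat ζ else rhat z₀) ∧
    (∀ x : ℝ, 0 < x →
      (x < (if ζ ≤ z₀ then rhat ζ else rhat z₀) / Real.sqrt ζ →
        Summable (fun n : ℕ => aMinusP n ζ * x ^ n)) ∧
      ((if ζ ≤ z₀ then rhat ζ else rhat z₀) / Real.sqrt ζ < x →
        ¬ Summable (fun n : ℕ => aMinusP n ζ * x ^ n))) ∧
    (∀ x : ℝ, 0 < x →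
      (x < (if z₀ ≤ ζ then rhat ζ else rhat z₀) / Real.sqrt ζ →
        Summable (fun n : ℕ => aPlusP n ζ * x ^ n)) ∧
      ((if z₀ ≤ ζ then rhat ζ else rhat z₀) / Real.sqrt ζ < x →
        ¬ Summable (fun n : ℕ => aPlusP n ζ * x ^ n))) := by
  have hmax : IsMaxOn rhat (Set.Ioi 0) z₀ := isMaxOn_iff.2 hmax
  have hs : 0 < √ζ := Real.sqrt_pos.2 hζ
  have rhat_min : (if ζ ≤ z₀ then rhat ζ else rhat z₀) = rhat (min ζ z₀) := by
    rw [min_def, apply_ite rhat]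
  have rhat_max : (if z₀ ≤ ζ then rhat ζ else rhat z₀) = rhat (max z₀ ζ) := by
    rw [max_def, apply_ite rhat]
  have image_Ioc : {y : ℝ | ∃ ω : ℝ, 0 < ω ∧ ω ≤ ζ ∧ y = rhat ω} = rhat '' Set.Ioc 0 ζ := by
    simp [Set.image, eq_comm, and_assoc]
  have image_Ici : {y : ℝ | ∃ ω : ℝ, ζ ≤ ω ∧ y = rhat ω} = rhat '' Set.Ici ζ := by
    simp [Set.image, eq_comm]
  rw [rhat_min, rhat_max, image_Ioc, image_Ici]
  refine ⟨(isGreatest_rhat_image_Ioc hmax hz₀ hζ).csSup_eq,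
    (isGreatest_rhat_image_Ici hmax hz₀ hζ).csSup_eq, fun x hx => ?_, fun x hx => ?_⟩
  · rw [summable_aMinusP_iff hx hζ, not_not, lt_div_iff₀ hs, div_lt_iff₀ hs]
    exact ⟨series_lower_ne_top_of_lt_rhat (lt_min hζ hz₀) (min_le_left _ _) (by positivity),
      series_lower_eq_top_of_isMaxOn hmax hζ⟩
  · rw [summable_aPlusP_iff hx hζ, not_not, lt_div_iff₀ hs, div_lt_iff₀ hs]
    exact ⟨series_upper_ne_top_of_lt_rhat hζ (le_max_right _ _) (by positivity),
      series_upper_eq_top_of_isMaxOn hmax hz₀ hζ⟩
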